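/- Let N be an even positive integer, let μ be a Borel measure on ℝ, and let φ₁,…,φ_N : ℝ → ℝ be μ-integrable measurable functions such that (x₁,…,x_N) ↦ det(φ_j(x_k))_{1≤j,k≤N} is integrable with respect to μ^⊗N over the ordered region {(x₁,…,x_N) : x₁ ≤ x₂ ≤ ⋯ ≤ x_N}. Then ( ∫_{x₁≤x₂≤⋯≤x_N} det(φ_j(x_k))_{1≤j,k≤N} dμ(x₁)⋯dμ(x_N) )² = det( ∫_ℝ∫_ℝ sgn(x−y) φ_j(x) φ_k(y) dμ(x) dμ(y) )_{1≤j,k≤N}. -/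

import Mathlib

open MeasureTheory

/-- product of signs -/
noncomputable def EE {n : ℕ} (x : Fin n → ℝ) : ℝ :=
  ∏ j, ∏ i ∈ Finset.Iio j, Real.sign (x j - x i)

lemma sgn_antisymm (a b : ℝ) : Real.sign (a - b) = - Real.sign (b - a) := by
  rw [← Real.sign_neg, neg_sub]

lemma EE_perm {n : ℕ} (x : Fin n → ℝ) (σ : Equiv.Perm (Fin n)) :
    EE (x ∘ σ) = (Equiv.Perm.sign σ : ℤ) * EE x := by
  unfold EE
  exact Equiv.Perm.prod_Iio_comp_eq_sign_mul_prod σ (f := fun i j => Real.sign (x j - x i))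
    (fun i j => sgn_antisymm _ _)

lemma EE_cons {n : ℕ} (t : ℝ) (y : Fin n → ℝ) :
    EE (Fin.cons t y : Fin (n+1) → ℝ) = (∏ j, Real.sign (y j - t)) * EE y := by
  unfold EE
  rw [Fin.prod_univ_succ]
  have h0 : (Finset.Iio (0 : Fin (n+1))) = ∅ := by ext; simp
  rw [h0, Finset.prod_empty, one_mul, ← Finset.prod_mul_distrib]
  refine Finset.prod_congr rfl fun j _ => ?_
  have : Finset.Iio j.succ = insert 0 ((Finset.Iio j).image Fin.succ) := by
    ext i
    refine Fin.cases ?_ (fun i => ?_) i <;> simp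
  rw [this, Finset.prod_insert (by simp), Finset.prod_image (by simp)]
  simp

lemma EE_succAbove {n : ℕ} (y : Fin (n+1) → ℝ) (k : Fin (n+1)) :
    (-1 : ℝ) ^ (k : ℕ) * EE y
      = (∏ j, Real.sign (y (k.succAbove j) - y k)) * EE (y ∘ k.succAbove) := by
  have h := EE_perm y k.cycleRange.symm
  have h2 : y ∘ k.cycleRange.symm = (Fin.cons (y k) (y ∘ k.succAbove) : Fin (n+1) → ℝ) := by
    ext i
    refine Fin.cases ?_ (fun i => ?_) i <;> simp
  rw [h2, EE_cons] at h
  simp at h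
  simp [h]

lemma EE_sq {n : ℕ} (y : Fin n → ℝ) (hy : Function.Injective y) : EE y * EE y = 1 := by
  unfold EE
  rw [← Finset.prod_mul_distrib]
  refine Finset.prod_eq_one fun j _ => ?_
  rw [← Finset.prod_mul_distrib]
  refine Finset.prod_eq_one fun i hi => ?_
  have : y j - y i ≠ 0 := by
    intro h
    have := hy (sub_eq_zero.1 h)
    simp at hi; omega
  rcases Real.sign_apply_eq_of_ne_zero _ this with h | h <;> simp [h]

lemma EE_noninj {n : ℕ} (y : Fin n → ℝ) (hy : ¬ Function.Injective y) : EE y = 0 := by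
  simp only [Function.Injective, not_forall] at hy
  obtain ⟨a, b, h, hne⟩ := hy
  unfold EE
  rcases lt_or_gt_of_ne hne with hl | hl
  · exact Finset.prod_eq_zero (Finset.mem_univ b)
      (Finset.prod_eq_zero (i := a) (by simpa using hl) (by simp [h]))
  · exact Finset.prod_eq_zero (Finset.mem_univ a)
      (Finset.prod_eq_zero (i := b) (by simpa using hl) (by simp [h]))

lemma EE_strictMono {n : ℕ} (y : Fin n → ℝ) (hy : StrictMono y) : EE y = 1 := by
  unfold EE
  refine Finset.prod_eq_one fun j _ => Finset.prod_eq_one fun i hi => ?_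
  exact Real.sign_of_pos (sub_pos.2 (hy (by simpa using hi)))

lemma sum_id (t : ℝ) (S : Finset ℝ) :
    (∑ a ∈ S, Real.sign (a - t) * ∏ b ∈ S.erase a, Real.sign (b - a))
      = (∏ a ∈ S, Real.sign (a - t)) - (if Even S.card then 1 else 0) := by
  induction S using Finset.induction_on_max with
  | empty => simp
  | insert M S hM ih =>
    have hMS : M ∉ S := fun h => lt_irrefl _ (hM M h)
    rw [Finset.sum_insert hMS, Finset.prod_insert hMS, Finset.erase_insert hMS,
      Finset.card_insert_of_notMem hMS]
    have h1 : ∏ b ∈ S, Real.sign (b - M) = (-1) ^ S.card := by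
      rw [Finset.prod_congr rfl (g := fun _ => (-1 : ℝ))]
      · simp
      · intro b hb; exact Real.sign_of_neg (sub_neg.2 (hM b hb))
    have h2 : ∀ a ∈ S, Real.sign (a - t) * ∏ b ∈ (insert M S).erase a, Real.sign (b - a)
        = Real.sign (a - t) * ∏ b ∈ S.erase a, Real.sign (b - a) := by
      intro a ha
      rw [Finset.erase_insert_of_ne (hM a ha).ne', Finset.prod_insert (by simp [hMS]),
        Real.sign_of_pos (sub_pos.2 (hM a ha)), one_mul]
    rw [Finset.sum_congr rfl h2, ih, h1]
    have h3 : Real.sign (M - t) = 1 ∨ ∏ a ∈ S, Real.sign (a - t) = (-1) ^ S.card := by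
      rcases lt_or_ge t M with h | h
      · left; exact Real.sign_of_pos (sub_pos.2 h)
      · right
        rw [Finset.prod_congr rfl (g := fun _ => (-1 : ℝ))]
        · simp
        · intro b hb; exact Real.sign_of_neg (sub_neg.2 ((hM b hb).trans_le h))
    rcases Nat.even_or_odd S.card with he | ho
    · rw [he.neg_one_pow] at *
      simp only [he, if_true, Nat.even_add_one, not_true, if_false]
      rcases h3 with h | h <;> rw [h] <;> ring
    · rw [ho.neg_one_pow] at *
      have : ¬ Even S.card := by simpa using ho
      simp only [this, if_false, Nat.even_add_one, not_false_eq_true, if_true]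
      rcases h3 with h | h <;> rw [h] <;> ring

lemma EE_tie {n : ℕ} (y : Fin (n+1) → ℝ) (a b : Fin (n+1)) (hab : a ≠ b) (h : y a = y b) :
    (-1 : ℝ) ^ (a : ℕ) * EE (y ∘ a.succAbove) + (-1 : ℝ) ^ (b : ℕ) * EE (y ∘ b.succAbove) = 0 := by
  set ρ : Equiv.Perm (Fin (n+1)) := a.cycleRange * Equiv.swap a b * b.cycleRange.symm with hρ
  have hρ0 : ρ 0 = 0 := by simp [hρ]
  obtain ⟨⟨p, τ⟩, hτ⟩ := Equiv.Perm.decomposeFin.symm.surjective ρ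
  have hp : p = 0 := by
    rw [← hτ] at hρ0
    simpa using hρ0
  subst hp
  have hs : ∀ x : Fin n, ρ x.succ = (τ x).succ := by
    intro x; rw [← hτ]; simp
  have hsign : Equiv.Perm.sign τ = -((-1) ^ (a : ℕ) * (-1) ^ (b : ℕ)) := by
    have h1 := Equiv.Perm.decomposeFin.symm_sign 0 τ
    rw [hτ] at h1
    simp [hρ, Equiv.Perm.sign_swap hab] at h1
    rw [← h1]
  have hy : y ∘ b.succAbove = (y ∘ a.succAbove) ∘ τ := by
    ext x
    have h2 : a.succAbove (τ x) = Equiv.swap a b (b.succAbove x) := by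
      rw [← Fin.cycleRange_symm_succ, ← hs, ← Fin.cycleRange_symm_succ b]
      simp [hρ]
    simp only [Function.comp, h2]
    rw [Equiv.swap_apply_def]
    split_ifs with h3 h4
    · rw [h3, h]
    · rw [h4, h]
    · rfl
  rw [hy, EE_perm, hsign]
  have := pow_mul_pow_eq_one (M := ℝ) (a := -1) (b := -1) (b : ℕ) (by norm_num)
  push_cast
  linear_combination (-(-1 : ℝ) ^ (a : ℕ) * EE (y ∘ a.succAbove)) * this

lemma EE_expand {n : ℕ} (hn : Odd (n+1)) (t : ℝ) (y : Fin (n+1) → ℝ) :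
    EE (Fin.cons t y : Fin (n+2) → ℝ)
      = ∑ k : Fin (n+1), (-1 : ℝ) ^ (k : ℕ) * (Real.sign (y k - t) * EE (y ∘ k.succAbove)) := by
  rw [EE_cons]
  by_cases hy : Function.Injective y
  · have key := sum_id t (Finset.univ.image y)
    rw [Finset.sum_image hy.injOn, Finset.prod_image hy.injOn,
      Finset.card_image_of_injective _ hy, Finset.card_fin, if_neg (by simpa using hn),
      sub_zero] at key
    rw [← key, Finset.sum_mul]
    refine Finset.sum_congr rfl fun k _ => ?_
    have h1 : ∏ b ∈ (Finset.univ.image y).erase (y k), Real.sign (b - y k)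
        = ∏ j, Real.sign (y (k.succAbove j) - y k) := by
      have : (Finset.univ.image y).erase (y k) = Finset.univ.image (y ∘ k.succAbove) := by
        rw [← Finset.image_erase hy, ← Finset.image_image]
        congr 1
        ext i
        simp
      rw [this, Finset.prod_image (hy.comp Fin.succAbove_right_injective).injOn]
      rfl
    rw [h1]
    have h2 := EE_succAbove y k
    have h3 := EE_sq y hy
    have h4 := EE_sq (y ∘ k.succAbove) (hy.comp Fin.succAbove_right_injective)
    have h5 := pow_mul_pow_eq_one (M := ℝ) (a := -1) (b := -1) (k : ℕ) (by norm_num)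
    set P := ∏ j, Real.sign (y (k.succAbove j) - y k)
    have h6 : P = (-1 : ℝ) ^ (k : ℕ) * EE y * EE (y ∘ k.succAbove) := by
      rw [h2, mul_assoc, h4, mul_one]
    rw [h6]
    linear_combination (Real.sign (y k - t) * (-1 : ℝ) ^ (k : ℕ) * EE (y ∘ k.succAbove)) * h3
  · rw [EE_noninj y hy, mul_zero]
    simp only [Function.Injective, not_forall] at hy
    obtain ⟨a, b, h, hne⟩ := hy
    rw [← Finset.sum_subset (Finset.subset_univ {a, b}), Finset.sum_pair hne]
    · have := EE_tie y a b hne h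
      rw [h]
      linear_combination -Real.sign (y b - t) * this
    · intro k _ hk
      simp only [Finset.mem_insert, Finset.mem_singleton, not_or] at hk
      rw [EE_noninj, mul_zero, mul_zero]
      intro hinj
      obtain ⟨a', ha⟩ := Fin.exists_succAbove_eq (Ne.symm hk.1)
      obtain ⟨b', hb⟩ := Fin.exists_succAbove_eq (Ne.symm hk.2)
      have : a' = b' := hinj (by simp [ha, hb, h])
      exact hne (by rw [← ha, ← hb, this])

lemma sum_strict {n : ℕ} (y : Fin n → ℝ) :
    ∑ σ : Equiv.Perm (Fin n), ((Equiv.Perm.sign σ : ℤ) : ℝ) *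
      Set.indicator {x : Fin n → ℝ | StrictMono x} (fun _ => (1 : ℝ)) (y ∘ σ) = EE y := by
  classical
  by_cases hy : Function.Injective y
  · rw [Finset.sum_eq_single (Tuple.sort y)]
    · have hm : StrictMono (y ∘ Tuple.sort y) :=
        (Tuple.monotone_sort y).strictMono_of_injective (hy.comp (Equiv.injective _))
      rw [Set.indicator_of_mem (by exact hm)]
      have h1 := EE_perm y (Tuple.sort y)
      rw [EE_strictMono _ hm] at h1
      have h2 : ((Equiv.Perm.sign (Tuple.sort y) : ℤ) : ℝ) * ((Equiv.Perm.sign (Tuple.sort y) : ℤ) : ℝ) = 1 := by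
        rw [← Int.cast_mul, ← Units.val_mul, Int.units_mul_self]; simp
      linear_combination ((Equiv.Perm.sign (Tuple.sort y) : ℤ) : ℝ) * h1 + EE y * h2
    · intro σ _ hσ
      rw [Set.indicator_of_notMem, mul_zero]
      intro h
      have h' : StrictMono (y ∘ σ) := h
      apply hσ
      have := Tuple.comp_sort_eq_comp_iff_monotone.2 h'.monotone
      ext i
      have h3 := hy (congrFun this i)
      rw [h3]
    · simp
  · rw [EE_noninj y hy]
    refine Finset.sum_eq_zero fun σ _ => ?_
    rw [Set.indicator_of_notMem, mul_zero]
    intro h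
    have h' : StrictMono (y ∘ σ) := h
    apply hy
    have := h'.injective.comp σ.symm.injective
    simpa [Function.comp_assoc] using this

lemma measurable_sgn : Measurable Real.sign := by
  unfold Real.sign
  exact Measurable.ite (measurableSet_lt measurable_id measurable_const) measurable_const
    (Measurable.ite (measurableSet_lt measurable_const measurable_id) measurable_const
      measurable_const)

lemma abs_sgn_le (r : ℝ) : |Real.sign r| ≤ 1 := by
  rcases Real.sign_apply_eq r with h | h | h <;> simp [h]

lemma measurable_EE {n : ℕ} : Measurable (EE : (Fin n → ℝ) → ℝ) := by
  unfold EE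
  refine Finset.measurable_prod _ fun j _ => Finset.measurable_prod _ fun i _ => ?_
  exact measurable_sgn.comp ((measurable_pi_apply j).sub (measurable_pi_apply i))

lemma abs_EE_le {n : ℕ} (x : Fin n → ℝ) : |EE x| ≤ 1 := by
  unfold EE
  rw [Finset.abs_prod]
  refine Finset.prod_le_one (fun _ _ => abs_nonneg _) fun j _ => ?_
  rw [Finset.abs_prod]
  exact Finset.prod_le_one (fun _ _ => abs_nonneg _) fun i _ => abs_sgn_le _

noncomputable def BB (μ : Measure ℝ) (f g : ℝ → ℝ) : ℝ :=
  ∫ x, ∫ y, Real.sign (x - y) * (f x * g y) ∂μ ∂μ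

noncomputable def KK (μ : Measure ℝ) {n : ℕ} (φ : Fin n → ℝ → ℝ) : ℝ :=
  ∫ x, EE x * ∏ j, φ j (x j) ∂(Measure.pi fun _ => μ)

section
variable (μ : Measure ℝ) [SigmaFinite μ]

lemma bdd_int {n : ℕ} (φ : Fin n → ℝ → ℝ) (hφ : ∀ j, Integrable (φ j) μ)
    (g : (Fin n → ℝ) → ℝ) (hg : Measurable g) (hb : ∀ x, |g x| ≤ 1) :
    Integrable (fun x => g x * ∏ j, φ j (x j)) (Measure.pi fun _ : Fin n => μ) :=
  (Integrable.fintype_prod (μ := fun _ : Fin n => μ) hφ).bdd_mul (c := 1)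
    hg.aestronglyMeasurable (Filter.Eventually.of_forall hb)

lemma B_int (f g : ℝ → ℝ) (hf : Integrable f μ) (hg : Integrable g μ) :
    Integrable (fun z : ℝ × ℝ => Real.sign (z.1 - z.2) * (f z.1 * g z.2)) (μ.prod μ) :=
  (hf.mul_prod hg).bdd_mul (c := 1)
    (measurable_sgn.comp (measurable_fst.sub measurable_snd)).aestronglyMeasurable
    (Filter.Eventually.of_forall fun _ => abs_sgn_le _)

lemma BB_eq (f g : ℝ → ℝ) (hf : Integrable f μ) (hg : Integrable g μ) :
    BB μ f g = ∫ z : ℝ × ℝ, Real.sign (z.1 - z.2) * (f z.1 * g z.2) ∂(μ.prod μ) :=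
  (integral_prod _ (B_int μ f g hf hg)).symm

lemma BB_antisymm (f g : ℝ → ℝ) (hf : Integrable f μ) (hg : Integrable g μ) :
    BB μ g f = - BB μ f g := by
  unfold BB
  rw [integral_integral_swap (by exact B_int μ g f hg hf), ← integral_neg]
  congr 1; ext x
  rw [← integral_neg]
  congr 1; ext y
  rw [sgn_antisymm]; ring

lemma add_int (f g : ℝ → ℝ) (c : ℝ) (hf : Integrable f μ) (hg : Integrable g μ) :
    Integrable (fun x => f x + c * g x) μ := hf.add (hg.const_mul c)

lemma BB_add_left (f g h : ℝ → ℝ) (c : ℝ) (hf : Integrable f μ) (hg : Integrable g μ)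
    (hh : Integrable h μ) :
    BB μ (fun x => f x + c * g x) h = BB μ f h + c * BB μ g h := by
  rw [BB_eq μ _ h (add_int μ f g c hf hg) hh, BB_eq μ f h hf hh, BB_eq μ g h hg hh,
    ← integral_const_mul, ← integral_add (B_int μ f h hf hh) ((B_int μ g h hg hh).const_mul c)]
  congr 1; ext x; ring

lemma BB_add_right (f g h : ℝ → ℝ) (c : ℝ) (hf : Integrable f μ) (hg : Integrable g μ)
    (hh : Integrable h μ) :
    BB μ h (fun x => f x + c * g x) = BB μ h f + c * BB μ h g := by
  rw [BB_antisymm μ _ h (add_int μ f g c hf hg) hh, BB_add_left μ f g h c hf hg hh,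
    BB_antisymm μ h f hh hf, BB_antisymm μ h g hh hg]
  ring

lemma perm_integral {n : ℕ} (σ : Equiv.Perm (Fin n)) (F : (Fin n → ℝ) → ℝ) :
    ∫ x, F (x ∘ σ) ∂(Measure.pi fun _ => μ) = ∫ x, F x ∂(Measure.pi fun _ => μ) := by
  have h := (measurePreserving_arrowCongr' (fun _ : Fin n => μ) (fun _ : Fin n => μ) σ.symm
    (MeasurableEquiv.refl ℝ) (fun _ => MeasurePreserving.id μ)).integral_comp' F
  rw [← h]
  rfl

lemma measurableSet_strictMono {n : ℕ} : MeasurableSet {x : Fin n → ℝ | StrictMono x} := by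
  have : {x : Fin n → ℝ | StrictMono x} = ⋂ i, ⋂ j, {x | i < j → x i < x j} := by
    ext x; simp [StrictMono]
  rw [this]
  refine MeasurableSet.iInter fun i => MeasurableSet.iInter fun j => ?_
  by_cases h : i < j
  · simp only [h, true_imp_iff]
    exact measurableSet_lt (measurable_pi_apply i) (measurable_pi_apply j)
  · simp [h]

lemma measurableSet_mono {n : ℕ} : MeasurableSet {x : Fin n → ℝ | Monotone x} := by
  have : {x : Fin n → ℝ | Monotone x} = ⋂ i, ⋂ j, {x | i ≤ j → x i ≤ x j} := by
    ext x; simp [Monotone]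
  rw [this]
  refine MeasurableSet.iInter fun i => MeasurableSet.iInter fun j => ?_
  by_cases h : i ≤ j
  · simp only [h, true_imp_iff]
    exact measurableSet_le (measurable_pi_apply i) (measurable_pi_apply j)
  · simp [h]

lemma JJ_eq {n : ℕ} (φ : Fin n → ℝ → ℝ) (hφ : ∀ j, Integrable (φ j) μ) :
    ∫ x in {x : Fin n → ℝ | Monotone x},
        (Matrix.of fun j k : Fin n => φ j (x k)).det ∂(Measure.pi fun _ => μ) = KK μ φ := by
  classical
  set s : (Fin n → ℝ) → ℝ := Set.indicator {x : Fin n → ℝ | StrictMono x} (fun _ => (1 : ℝ))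
    with hs
  have hsm : Measurable s := measurable_const.indicator measurableSet_strictMono
  have hsb : ∀ x, |s x| ≤ 1 := by
    intro x
    by_cases h : x ∈ {x : Fin n → ℝ | StrictMono x} <;> simp [hs, h]
  have hcm : ∀ σ : Equiv.Perm (Fin n), Measurable (fun x : Fin n → ℝ => x ∘ σ) := fun σ =>
    measurable_pi_lambda _ fun i => measurable_pi_apply (σ i)
  rw [← integral_indicator measurableSet_mono]
  have h1 : ∀ x : Fin n → ℝ, Set.indicator {x : Fin n → ℝ | Monotone x}
      (fun x => (Matrix.of fun j k : Fin n => φ j (x k)).det) x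
      = ∑ σ : Equiv.Perm (Fin n), ((Equiv.Perm.sign σ : ℤ) : ℝ) *
        (s x * ∏ k, φ (σ k) (x k)) := by
    intro x
    have hd : ∑ σ : Equiv.Perm (Fin n), ((Equiv.Perm.sign σ : ℤ) : ℝ) *
        (s x * ∏ k, φ (σ k) (x k)) = s x * (Matrix.of fun j k : Fin n => φ j (x k)).det := by
      rw [Matrix.det_apply', Finset.mul_sum]
      refine Finset.sum_congr rfl fun σ _ => ?_
      simp only [Matrix.of_apply]; ring
    rw [hd]
    by_cases hm : Monotone x
    · rw [Set.indicator_of_mem (by exact hm)]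
      by_cases hi : Function.Injective x
      · rw [hs, Set.indicator_of_mem (by exact hm.strictMono_of_injective hi), one_mul]
      · simp only [Function.Injective, not_forall] at hi
        obtain ⟨a, b, h, hne⟩ := hi
        rw [Matrix.det_zero_of_column_eq hne (by intro i; simp [h]), mul_zero]
    · rw [Set.indicator_of_notMem (by exact hm), hs,
        Set.indicator_of_notMem (by exact fun h => hm (StrictMono.monotone h)), zero_mul]
  simp_rw [h1]
  rw [integral_finsetSum]
  · have h2 : ∀ σ : Equiv.Perm (Fin n),
        ∫ x, ((Equiv.Perm.sign σ : ℤ) : ℝ) * (s x * ∏ k, φ (σ k) (x k)) ∂(Measure.pi fun _ => μ)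
        = ∫ x, ((Equiv.Perm.sign σ : ℤ) : ℝ) * (s (x ∘ σ) * ∏ k, φ k (x k))
          ∂(Measure.pi fun _ => μ) := by
      intro σ
      rw [← perm_integral μ σ]
      congr 1; ext x
      simp only [Function.comp]
      rw [Equiv.prod_comp σ (fun k => φ k (x k))]
    simp_rw [h2]
    rw [← integral_finsetSum]
    · unfold KK
      congr 1; ext x
      rw [← sum_strict x, Finset.sum_mul]
      refine Finset.sum_congr rfl fun σ _ => ?_
      ring
    · intro σ _
      exact (bdd_int μ φ hφ (fun x => s (x ∘ σ)) (hsm.comp (hcm σ)) (fun x => hsb _)).const_mul _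
  · intro σ _
    exact (bdd_int μ (fun k => φ (σ k)) (fun k => hφ _) s hsm hsb).const_mul _

lemma pi_split {n : ℕ} (k : Fin (n+1)) (F : (Fin (n+1) → ℝ) → ℝ)
    (hF : Integrable F (Measure.pi fun _ => μ)) :
    ∫ x, F x ∂(Measure.pi fun _ => μ)
      = ∫ t, ∫ y, F (k.insertNth t y) ∂(Measure.pi fun _ : Fin n => μ) ∂μ := by
  have h := (measurePreserving_piFinSuccAbove (fun _ : Fin (n+1) => μ) k).symm
  rw [← h.integral_comp', integral_prod]
  · rfl
  · exact (h.integrable_comp_emb (MeasurableEquiv.measurableEmbedding _)).2 hF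

lemma KK_term {n : ℕ} (φ : Fin (n+2) → ℝ → ℝ) (hφ : ∀ j, Integrable (φ j) μ)
    (k : Fin (n+1)) :
    ∫ x : Fin (n+2) → ℝ, (Real.sign (x k.succ - x 0) * EE ((x ∘ Fin.succ) ∘ k.succAbove))
        * ∏ j, φ j (x j) ∂(Measure.pi fun _ => μ)
      = - BB μ (φ 0) (φ k.succ) * KK μ (fun j => φ (k.succAbove j).succ) := by
  rw [pi_split μ 0]
  swap
  · apply bdd_int μ φ hφ
    · exact (measurable_sgn.comp ((measurable_pi_apply k.succ).sub (measurable_pi_apply 0))).mul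
        (measurable_EE.comp (measurable_pi_lambda _ fun i => measurable_pi_apply _))
    · intro x
      rw [abs_mul]
      exact mul_le_one₀ (abs_sgn_le _) (abs_nonneg _) (abs_EE_le _)
  unfold BB
  rw [← integral_neg, ← integral_mul_const]
  congr 1; ext t
  have h1 : ∀ y : Fin (n+1) → ℝ,
      (Real.sign ((Fin.insertNth 0 t y : Fin (n+2) → ℝ) k.succ -
        (Fin.insertNth 0 t y : Fin (n+2) → ℝ) 0) *
        EE (((Fin.insertNth 0 t y : Fin (n+2) → ℝ) ∘ Fin.succ) ∘ k.succAbove)) *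
        ∏ j, φ j ((Fin.insertNth 0 t y : Fin (n+2) → ℝ) j)
      = φ 0 t * ((Real.sign (y k - t) * EE (y ∘ k.succAbove)) * ∏ j, φ j.succ (y j)) := by
    intro y
    rw [Fin.prod_univ_succ]
    simp only [Fin.insertNth_zero', Fin.cons_zero, Fin.cons_succ]
    have : (Fin.cons t y : Fin (n+2) → ℝ) ∘ Fin.succ = y := by ext i; simp
    rw [this]; ring
  simp_rw [h1]
  rw [integral_const_mul, pi_split μ k]
  swap
  · apply bdd_int μ (fun j => φ j.succ) (fun j => hφ _)
    · exact (measurable_sgn.comp ((measurable_pi_apply _).sub measurable_const)).mul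
        (measurable_EE.comp (measurable_pi_lambda _ fun i => measurable_pi_apply _))
    · intro x
      rw [abs_mul]
      exact mul_le_one₀ (abs_sgn_le _) (abs_nonneg _) (abs_EE_le _)
  rw [← integral_neg, ← integral_mul_const, ← integral_const_mul]
  congr 1; ext s
  unfold KK
  rw [← integral_const_mul, ← integral_const_mul]
  congr 1; ext z
  rw [Fin.prod_univ_succAbove _ k]
  simp only [Fin.insertNth_apply_same, Fin.insertNth_apply_succAbove]
  have : (k.insertNth s z : Fin (n+1) → ℝ) ∘ k.succAbove = z := by ext i; simp
  rw [this, sgn_antisymm s t]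
  ring

lemma KK_expand {n : ℕ} (hn : Odd (n+1)) (φ : Fin (n+2) → ℝ → ℝ)
    (hφ : ∀ j, Integrable (φ j) μ) :
    KK μ φ = ∑ k : Fin (n+1), (-1 : ℝ) ^ (k : ℕ) *
      (- BB μ (φ 0) (φ k.succ) * KK μ (fun j => φ (k.succAbove j).succ)) := by
  simp_rw [← KK_term μ φ hφ, ← integral_const_mul]
  rw [← integral_finsetSum]
  · unfold KK
    congr 1; ext x
    have h := EE_expand hn (x 0) (x ∘ Fin.succ)
    have h2 : (Fin.cons (x 0) (x ∘ Fin.succ) : Fin (n+2) → ℝ) = x := Fin.cons_self_tail x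
    rw [h2] at h
    rw [h, Finset.sum_mul]
    refine Finset.sum_congr rfl fun k _ => ?_
    simp only [Function.comp]; ring
  · intro k _
    apply Integrable.const_mul
    apply bdd_int μ φ hφ
    · exact (measurable_sgn.comp ((measurable_pi_apply k.succ).sub (measurable_pi_apply 0))).mul
        (measurable_EE.comp (measurable_pi_lambda _ fun i => measurable_pi_apply _))
    · intro x
      rw [abs_mul]
      exact mul_le_one₀ (abs_sgn_le _) (abs_nonneg _) (abs_EE_le _)

lemma KK_shear {n : ℕ} (φ : Fin n → ℝ → ℝ) (hφ : ∀ j, Integrable (φ j) μ)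
    (c : Fin n → ℝ) (k : Fin n) (hk : c k = 0) :
    KK μ (fun j x => φ j x + c j * φ k x) = KK μ φ := by
  rw [← JJ_eq μ φ hφ, ← JJ_eq μ _ (fun j => add_int μ _ _ (c j) (hφ j) (hφ k))]
  congr 1; ext x
  exact Matrix.det_eq_of_forall_row_eq_smul_add_const c k hk (fun i j => by simp)

noncomputable def AA {n : ℕ} (φ : Fin n → ℝ → ℝ) : Matrix (Fin n) (Fin n) ℝ :=
  Matrix.of fun j k => BB μ (φ j) (φ k)

lemma AA_shear {n : ℕ} (φ : Fin n → ℝ → ℝ) (hφ : ∀ j, Integrable (φ j) μ)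
    (c : Fin n → ℝ) (k : Fin n) (hk : c k = 0) :
    (AA μ (fun j x => φ j x + c j * φ k x)).det = (AA μ φ).det := by
  have h1 : (Matrix.of fun i j => AA μ φ j i + c i * AA μ φ j k).det = (AA μ φ).det := by
    rw [← Matrix.det_transpose (AA μ φ)]
    exact Matrix.det_eq_of_forall_row_eq_smul_add_const c k hk (fun i j => by simp)
  rw [← h1, ← Matrix.det_transpose (Matrix.of _)]
  refine Matrix.det_eq_of_forall_row_eq_smul_add_const c k hk (fun i j => ?_)
  simp only [AA, Matrix.of_apply, Matrix.transpose_apply]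
  rw [BB_add_left μ _ _ _ _ (hφ i) (hφ k) (add_int μ _ _ (c j) (hφ j) (hφ k)),
    BB_add_right μ _ _ _ _ (hφ j) (hφ k) (hφ i), BB_add_right μ _ _ _ _ (hφ j) (hφ k) (hφ k)]

lemma main_even (n : ℕ) : ∀ φ : Fin (2 * n) → ℝ → ℝ, (∀ j, Integrable (φ j) μ) →
    KK μ φ ^ 2 = (AA μ φ).det := by
  induction n with
  | zero =>
    intro φ _
    have : IsEmpty (Fin (2 * 0)) := inferInstanceAs (IsEmpty (Fin 0))
    simp only [KK, EE]
    rw [Measure.pi_of_empty]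
    simp
  | succ n ih =>
    have special : ∀ φ : Fin (2 * n + 2) → ℝ → ℝ, (∀ j, Integrable (φ j) μ) →
        ∀ k : Fin (2 * n + 1), (∀ j, j ≠ k → BB μ (φ 0) (φ j.succ) = 0) →
        KK μ φ ^ 2 = (AA μ φ).det := by
      intro φ hφ k hk
      have h00 : BB μ (φ 0) (φ 0) = 0 := by
        have := BB_antisymm μ (φ 0) (φ 0) (hφ 0) (hφ 0); linarith
      have hanti : ∀ j, BB μ (φ j) (φ 0) = - BB μ (φ 0) (φ j) := fun j =>
        BB_antisymm μ _ _ (hφ 0) (hφ j)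
      rw [KK_expand μ ⟨n, rfl⟩ φ hφ, Finset.sum_eq_single k
        (by intro j _ hj; rw [hk j hj]; simp) (by simp)]
      rw [Matrix.det_succ_row_zero, Finset.sum_eq_single k.succ _ (by simp)]
      · rw [Matrix.det_succ_column_zero, Finset.sum_eq_single k _ (by simp)]
        · have e : (((AA μ φ).submatrix Fin.succ k.succ.succAbove).submatrix k.succAbove Fin.succ)
              = AA μ (fun j => φ (k.succAbove j).succ) := by
            ext i j
            simp [AA]
          have h1 := ih (fun j => φ (k.succAbove j).succ) (fun j => hφ _)
          rw [e, ← h1]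
          have h5 := pow_mul_pow_eq_one (M := ℝ) (a := -1) (b := -1) (k : ℕ) (by norm_num)
          simp only [AA, Matrix.of_apply, Matrix.submatrix_apply, Fin.val_succ, pow_succ,
            Fin.succ_succAbove_zero, hanti]
          ring
        · intro j _ hj
          simp [AA, hanti, hk j hj]
      · intro j _ hj
        refine Fin.cases (fun _ => ?_) (fun j hj => ?_) j hj
        · simp [AA, h00]
        · simp [AA, hk j (fun h => hj (by rw [h]))]
    intro φ hφ
    change Fin (2 * n + 2) → ℝ → ℝ at φ
    by_cases hz : ∀ j : Fin (2 * n + 1), BB μ (φ 0) (φ j.succ) = 0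
    · exact special φ hφ 0 (fun j _ => hz j)
    · push Not at hz
      obtain ⟨k, hk⟩ := hz
      set c : Fin (2 * n + 2) → ℝ := Fin.cons 0
        (fun j => if j = k then 0 else - BB μ (φ 0) (φ j.succ) / BB μ (φ 0) (φ k.succ)) with hc
      have hck : c k.succ = 0 := by simp [hc]
      have hc0 : c 0 = 0 := by simp [hc]
      have h1 := special (fun j x => φ j x + c j * φ k.succ x)
        (fun j => add_int μ _ _ (c j) (hφ j) (hφ _)) k (by
          intro j hj
          simp only [hc0, zero_mul, add_zero]
          rw [BB_add_right μ _ _ _ _ (hφ _) (hφ _) (hφ _)]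
          simp only [hc, Fin.cons_succ, if_neg hj]
          field_simp
          ring)
      rw [KK_shear μ φ hφ c _ hck, AA_shear μ φ hφ c _ hck] at h1
      exact h1

end


/-- The square of de Bruijn's second integral identity (ordered integral as a Pfaffian,
squared to give a determinant). -/
theorem deBruijn_ordered_sq (N : ℕ) (hN : 0 < N) (hNeven : Even N)
    (μ : Measure ℝ) [SigmaFinite μ]
    (φ : Fin N → ℝ → ℝ) (hmeas : ∀ j, Measurable (φ j)) (hint : ∀ j, Integrable (φ j) μ)
    (hdet : IntegrableOn
      (fun x : Fin N → ℝ => (Matrix.of fun j k : Fin N => φ j (x k)).det)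
      {x : Fin N → ℝ | Monotone x} (Measure.pi fun _ => μ)) :
    (∫ x in {x : Fin N → ℝ | Monotone x},
        (Matrix.of fun j k : Fin N => φ j (x k)).det ∂(Measure.pi fun _ => μ)) ^ 2
      = (Matrix.of fun j k : Fin N =>
          ∫ x, ∫ y, Real.sign (x - y) * (φ j x * φ k y) ∂μ ∂μ).det := by
  obtain ⟨m, hm⟩ := hNeven
  obtain rfl : N = 2 * m := by omega
  rw [JJ_eq μ φ hint]
  exact main_even μ m φ hint
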